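/- Let T₁ = (S₁,Σ₁,κ₁) and T₂ = (S₂,Σ₂,κ₂) be STSs, α : S₁ → S₂ measurable with T₂ an α-abstraction of T₁, and μ a probability measure on S₁. If T₂ is decisive from α_# μ w.r.t. every B ∈ Σ₂ (i.e. Prob^{T₂}_{α_# μ}(F B ∪ F B̃) = 1 for every B ∈ Σ₂), then T₂ is a μ-complete α-abstraction of T₁: for every B ∈ Σ₂, Prob^{T₁}_μ(F α⁻¹(B)) = 1 implies Prob^{T₂}_{α_# μ}(F B) = 1. -/

import Mathlib

open MeasureTheory ProbabilityTheory ENNReal Filter Topology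

namespace STS

variable {S : Type*} [MeasurableSpace S]

/-- Probability of the cylinder `Cyl(A 0, …, A n)` for the Markov chain with kernel `κ`
and initial distribution `μ`. -/
noncomputable def cylProb (κ : Kernel S S) : ℕ → Measure S → (ℕ → Set S) → ℝ≥0∞
  | 0, μ, A => μ (A 0)
  | n + 1, μ, A => ∫⁻ s in A 0, cylProb κ n (κ s) (fun i => A (i + 1)) ∂μ

/-- `P` assigns to each initial (probability) distribution the path measure (on `ℕ → S`,
with the product σ-algebra) of the time-homogeneous Markov chain with transition kernel `κ`,
as given by the Ionescu–Tulcea construction: it is the unique probability measure giving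
cylinders their prescribed probabilities. -/
def IsPathMeasure (κ : Kernel S S) (P : Measure S → Measure (ℕ → S)) : Prop :=
  ∀ μ : Measure S, IsProbabilityMeasure μ →
    IsProbabilityMeasure (P μ) ∧
    ∀ (n : ℕ) (A : ℕ → Set S), (∀ i, MeasurableSet (A i)) →
      P μ {ρ | ∀ i ≤ n, ρ i ∈ A i} = cylProb κ n μ A

/-- The path event `F B`: eventually reach `B`. -/
def evF (B : Set S) : Set (ℕ → S) := {ρ | ∃ k, ρ k ∈ B}

/-- The path event `F≤n B`. -/
def evFle (n : ℕ) (B : Set S) : Set (ℕ → S) := {ρ | ∃ k ≤ n, ρ k ∈ B}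

/-- The path event `F≥p B`. -/
def evFge (p : ℕ) (B : Set S) : Set (ℕ → S) := {ρ | ∃ k, p ≤ k ∧ ρ k ∈ B}

/-- The path event `GF B`: visit `B` infinitely often. -/
def evGF (B : Set S) : Set (ℕ → S) := {ρ | ∀ n, ∃ k, n ≤ k ∧ ρ k ∈ B}

/-- The path event `FG B`: eventually stay in `B` forever. -/
def evFG (B : Set S) : Set (ℕ → S) := {ρ | ∃ n, ∀ k, n ≤ k → ρ k ∈ B}

/-- The until event `B' U B`. -/
def evU (B' B : Set S) : Set (ℕ → S) := {ρ | ∃ k, ρ k ∈ B ∧ ∀ j < k, ρ j ∈ B'}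

/-- The bounded until event `B' U≤n B`. -/
def evUle (n : ℕ) (B' B : Set S) : Set (ℕ → S) := {ρ | ∃ k ≤ n, ρ k ∈ B ∧ ∀ j < k, ρ j ∈ B'}

/-- The avoid-set `B̃` of `B`: states from which `B` is reached with probability `0`. -/
def avoid (P : Measure S → Measure (ℕ → S)) (B : Set S) : Set S :=
  {s | P (Measure.dirac s) (evF B) = 0}

/-- `T` is decisive w.r.t. `B` from `μ`. -/
def Decisive (P : Measure S → Measure (ℕ → S)) (μ : Measure S) (B : Set S) : Prop :=
  P μ (evF B ∪ evF (avoid P B)) = 1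

/-- `T` is strongly decisive w.r.t. `B` from `μ`. -/
def StronglyDecisive (P : Measure S → Measure (ℕ → S)) (μ : Measure S) (B : Set S) : Prop :=
  P μ (evGF B ∪ evF (avoid P B)) = 1

/-- `T` is persistently decisive w.r.t. `B` from `μ`. -/
def PersistentlyDecisive (P : Measure S → Measure (ℕ → S)) (μ : Measure S) (B : Set S) : Prop :=
  ∀ p : ℕ, P μ (evFge p B ∪ evFge p (avoid P B)) = 1

/-- `PreProb(B)`: measurable sets `B'` from which `B` is reached in one step with positive
probability, whatever the initial distribution concentrated on `B'`. -/
def PreProb (P : Measure S → Measure (ℕ → S)) (B : Set S) : Set (Set S) :=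
  {B' | MeasurableSet B' ∧ ∀ μ' : Measure S, IsProbabilityMeasure μ' → μ' B' = 1 →
    0 < P μ' {ρ | ρ 0 ∈ B' ∧ ρ 1 ∈ B}}

/-- `T` is fair w.r.t. `B` from `μ`. -/
def Fair (P : Measure S → Measure (ℕ → S)) (μ : Measure S) (B : Set S) : Prop :=
  ∀ B' ∈ PreProb P B, 0 < P μ (evGF B') →
    P μ (evGF B ∩ evGF B') = P μ (evGF B')

/-- The one-step measure transformer `Ω_T`. -/
noncomputable def Omega (κ : Kernel S S) (μ : Measure S) : Measure S :=
  μ.bind (fun s => κ s)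

/-- Two measures are qualitatively equivalent if they have the same null (measurable) sets. -/
def QualEquiv {T : Type*} [MeasurableSpace T] (μ ν : Measure T) : Prop :=
  ∀ A : Set T, MeasurableSet A → (μ A = 0 ↔ ν A = 0)

/-- `T₂ = (S₂,κ₂)` is an `α`-abstraction of `T₁ = (S₁,κ₁)`. -/
def IsAbstraction {S₁ S₂ : Type*} [MeasurableSpace S₁] [MeasurableSpace S₂]
    (κ₁ : Kernel S₁ S₁) (κ₂ : Kernel S₂ S₂) (α : S₁ → S₂) : Prop :=
  ∀ μ : Measure S₁, IsProbabilityMeasure μ →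
    QualEquiv (Measure.map α (Omega κ₁ μ)) (Omega κ₂ (Measure.map α μ))

/-!
Qualitative equivalence of measures survives both the restriction to a set and one step of the
two chains, so a finite cylinder, and hence an until event `B' U B`, is null in `T₂` if and only if
its preimage is null in `T₁`; in particular, avoid-sets pull back to avoid-sets. By the Markov
property a path almost surely never meets `B` once it has entered the avoid-set `B̃`. Hence, if
`α⁻¹(B)` is reached almost surely, the event `Bᶜ U B̃` is null in `T₁`, and therefore in `T₂`. As
`F B ∪ F B̃ = F B ∪ (Bᶜ U B̃)`, decisiveness with respect to `B` leaves `F B` with probability one.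
-/

section PathEvent

variable {X : Type*}

theorem evF_eq_evU_univ (B : Set X) : evF B = evU Set.univ B := by
  simp [evF, evU]

theorem evF_union_evF_eq_evF_union_evU (B C : Set X) : evF B ∪ evF C = evF B ∪ evU Bᶜ C := by
  ext ρ
  constructor
  · rintro (hB | ⟨k, hk⟩)
    · exact .inl hB
    · by_cases hB : ρ ∈ evF B
      · exact .inl hB
      · exact .inr ⟨k, hk, fun j _ hj => hB ⟨j, hj⟩⟩
  · rintro (hB | ⟨k, hk, -⟩)
    exacts [.inl hB, .inr ⟨k, hk⟩]

/-- The base sequence `B', …, B', B` of the cylinder of paths that are in `B` at time `k` and in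
`B'` before. The entries after time `k` are irrelevant. -/
def untilCyl (B' B : Set X) (k : ℕ) : ℕ → Set X := Function.update (fun _ => B') k B

theorem preimage_untilCyl {T : Type*} (α : T → X) (B' B : Set X) (k i : ℕ) :
    α ⁻¹' untilCyl B' B k i = untilCyl (α ⁻¹' B') (α ⁻¹' B) k i :=
  Function.apply_update (fun _ C => α ⁻¹' C) (fun _ => B') k B i

theorem evU_eq_iUnion_untilCyl (B' B : Set X) :
    evU B' B = ⋃ k, {ρ | ∀ i ≤ k, ρ i ∈ untilCyl B' B k i} := by
  ext ρ
  simp only [evU, Set.mem_iUnion, Set.mem_ofPred_eq]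
  refine exists_congr fun k => ⟨fun ⟨hB, hB'⟩ i hi => ?_, fun h => ⟨?_, fun j hj => ?_⟩⟩
  · obtain rfl | hik := hi.eq_or_lt
    · simpa [untilCyl] using hB
    · simpa [untilCyl, hik.ne] using hB' i hik
  · simpa [untilCyl] using h k le_rfl
  · simpa [untilCyl, hj.ne] using h j hj.le

end PathEvent

theorem measurableSet_evF {B : Set S} (hB : MeasurableSet B) : MeasurableSet (evF B) := by
  have hunion : evF B = ⋃ k, (fun ρ : ℕ → S => ρ k) ⁻¹' B := by
    ext ρ
    simp [evF]
  rw [hunion]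
  exact .iUnion fun k => measurable_pi_apply k hB

theorem QualEquiv.restrict {μ ν : Measure S} (h : QualEquiv μ ν) {B : Set S}
    (hB : MeasurableSet B) : QualEquiv (μ.restrict B) (ν.restrict B) := fun A hA => by
  rw [Measure.restrict_apply hA, Measure.restrict_apply hA]
  exact h _ (hA.inter hB)

theorem Omega_apply_eq_zero_iff (κ : Kernel S S) (μ : Measure S) {A : Set S}
    (hA : MeasurableSet A) : Omega κ μ A = 0 ↔ ∀ᵐ s ∂μ, κ s A = 0 := by
  rw [Omega, Measure.bind_apply hA κ.aemeasurable, lintegral_eq_zero_iff (κ.measurable_coe hA)]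
  rfl

section Cylinder

variable (κ : Kernel S S) {A : ℕ → Set S}

theorem measurable_cylProb (n : ℕ) (hA : ∀ i, MeasurableSet (A i)) :
    Measurable fun μ => cylProb κ n μ A := by
  induction n generalizing A with
  | zero => exact Measure.measurable_coe (hA 0)
  | succ n ih =>
    have hnext : Measurable fun s => cylProb κ n (κ s) fun i => A (i + 1) :=
      (ih fun i => hA (i + 1)).comp κ.measurable
    simp only [cylProb, ← lintegral_indicator (hA 0)]
    exact Measure.measurable_lintegral (hnext.indicator (hA 0))

theorem cylProb_bind {T : Type*} [MeasurableSpace T] {μ : Measure T} {η : T → Measure S}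
    (hη : Measurable η) (n : ℕ) (hA : ∀ i, MeasurableSet (A i)) :
    cylProb κ n (μ.bind η) A = ∫⁻ t, cylProb κ n (η t) A ∂μ := by
  cases n with
  | zero => exact Measure.bind_apply (hA 0) hη.aemeasurable
  | succ n =>
    have hnext : Measurable fun s => cylProb κ n (κ s) fun i => A (i + 1) :=
      (measurable_cylProb κ n fun i => hA (i + 1)).comp κ.measurable
    simp only [cylProb, ← lintegral_indicator (hA 0)]
    exact Measure.lintegral_bind hη.aemeasurable (hnext.indicator (hA 0)).aemeasurable

theorem cylProb_eq_lintegral_dirac (n : ℕ) (μ : Measure S) (hA : ∀ i, MeasurableSet (A i)) :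
    cylProb κ n μ A = ∫⁻ s, cylProb κ n (Measure.dirac s) A ∂μ := by
  rw [← cylProb_bind κ Measure.measurable_dirac n hA, Measure.bind_dirac]

theorem cylProb_succ_eq_cylProb_Omega (n : ℕ) (μ : Measure S) (hA : ∀ i, MeasurableSet (A i)) :
    cylProb κ (n + 1) μ A = cylProb κ n (Omega κ (μ.restrict (A 0))) fun i => A (i + 1) :=
  (cylProb_bind κ κ.measurable n fun i => hA (i + 1)).symm

theorem cylProb_dirac_eq_zero_of_notMem (n : ℕ) (hA : MeasurableSet (A 0)) {s : S}
    (hs : s ∉ A 0) : cylProb κ n (Measure.dirac s) A = 0 := by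
  have hnull : Measure.dirac s (A 0) = 0 := by
    rw [Measure.dirac_apply' s hA, Set.indicator_of_notMem hs]
  cases n with
  | zero => exact hnull
  | succ n => exact setLIntegral_measure_zero _ _ hnull

theorem cylProb_add_eq_zero_of_forall_dirac (k m : ℕ) (μ : Measure S)
    (hA : ∀ i, MeasurableSet (A i))
    (htail : ∀ s ∈ A k, cylProb κ m (Measure.dirac s) (fun i => A (k + i)) = 0) :
    cylProb κ (k + m) μ A = 0 := by
  induction k generalizing μ A with
  | zero =>
    simp only [Nat.zero_add] at htail ⊢
    have hzero (s : S) : cylProb κ m (Measure.dirac s) A = 0 := by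
      by_cases hs : s ∈ A 0
      exacts [htail s hs, cylProb_dirac_eq_zero_of_notMem κ m (hA 0) hs]
    simp only [cylProb_eq_lintegral_dirac κ m μ hA, hzero, lintegral_zero]
  | succ k ih =>
    rw [Nat.add_right_comm, cylProb_succ_eq_cylProb_Omega κ _ μ hA]
    refine ih _ (fun i => hA (i + 1)) fun s hs => ?_
    simpa only [Nat.add_right_comm k _ 1] using htail s hs

end Cylinder

theorem measurableSet_untilCyl {B' B : Set S} (hB' : MeasurableSet B') (hB : MeasurableSet B)
    (k i : ℕ) : MeasurableSet (untilCyl B' B k i) := by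
  obtain rfl | hik := eq_or_ne i k
  · simpa [untilCyl] using hB
  · simpa [untilCyl, hik] using hB'

section PathMeasure

variable {κ : Kernel S S} {P : Measure S → Measure (ℕ → S)} {B' B : Set S}

theorem IsPathMeasure.measure_evU_eq_zero_iff (hP : IsPathMeasure κ P) (μ : Measure S)
    [hμ : IsProbabilityMeasure μ] (hB' : MeasurableSet B') (hB : MeasurableSet B) :
    P μ (evU B' B) = 0 ↔ ∀ k, cylProb κ k μ (untilCyl B' B k) = 0 := by
  rw [evU_eq_iUnion_untilCyl, measure_iUnion_null_iff]
  exact forall_congr' fun k => by rw [(hP μ hμ).2 k _ (measurableSet_untilCyl hB' hB k)]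

theorem IsPathMeasure.measurableSet_avoid (hP : IsPathMeasure κ P) (hB : MeasurableSet B) :
    MeasurableSet (avoid P B) := by
  have hinter : avoid P B =
      ⋂ k, {s | cylProb κ k (Measure.dirac s) (untilCyl Set.univ B k) = 0} := by
    ext s
    simp only [avoid, evF_eq_evU_univ, hP.measure_evU_eq_zero_iff _ .univ hB, Set.mem_ofPred_eq,
      Set.mem_iInter]
  rw [hinter]
  exact .iInter fun k => (measurable_cylProb κ k (measurableSet_untilCyl .univ hB k)).comp
    Measure.measurable_dirac (measurableSet_singleton 0)

theorem IsPathMeasure.measure_mem_avoid_and_mem_eq_zero (hP : IsPathMeasure κ P) (μ : Measure S)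
    [hμ : IsProbabilityMeasure μ] (hB : MeasurableSet B) (k m : ℕ) :
    P μ {ρ | ρ k ∈ avoid P B ∧ ρ (k + m) ∈ B} = 0 := by
  let A (i : ℕ) : Set S := {s | (i = k → s ∈ avoid P B) ∧ (i = k + m → s ∈ B)}
  have hA (i : ℕ) : MeasurableSet (A i) :=
    ((MeasurableSet.const _).imp (hP.measurableSet_avoid hB)).inter ((MeasurableSet.const _).imp hB)
  have htail : ∀ s ∈ A k, cylProb κ m (Measure.dirac s) (fun i => A (k + i)) = 0 := by
    intro s hs
    rw [← (hP (Measure.dirac s) inferInstance).2 m _ fun i => hA (k + i)]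
    have havoid : P (Measure.dirac s) (evF B) = 0 := hs.1 rfl
    refine measure_mono_null ?_ havoid
    exact fun ρ hρ => ⟨m, (hρ m le_rfl).2 rfl⟩
  have hcyl : P μ {ρ | ∀ i ≤ k + m, ρ i ∈ A i} = 0 := by
    rw [(hP μ hμ).2 _ A hA]
    exact cylProb_add_eq_zero_of_forall_dirac κ k m μ hA htail
  refine measure_mono_null ?_ hcyl
  rintro ρ ⟨hk, hkm⟩ i -
  exact ⟨fun hi => hi ▸ hk, fun hi => hi ▸ hkm⟩

theorem IsPathMeasure.ae_notMem_of_mem_avoid (hP : IsPathMeasure κ P) (μ : Measure S)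
    [IsProbabilityMeasure μ] (hB : MeasurableSet B) :
    ∀ᵐ ρ ∂P μ, ∀ k, ρ k ∈ avoid P B → ∀ j ≥ k, ρ j ∉ B := by
  have hnull : ∀ᵐ ρ ∂P μ, ∀ k m, ¬(ρ k ∈ avoid P B ∧ ρ (k + m) ∈ B) :=
    ae_all_iff.2 fun k => ae_all_iff.2 fun m =>
      measure_eq_zero_iff_ae_notMem.1 (hP.measure_mem_avoid_and_mem_eq_zero μ hB k m)
  filter_upwards [hnull] with ρ hρ k hk j hj hjB
  obtain ⟨m, rfl⟩ := Nat.exists_eq_add_of_le hj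
  exact hρ k m ⟨hk, hjB⟩

theorem IsPathMeasure.measure_evU_compl_avoid_eq_zero (hP : IsPathMeasure κ P) {μ : Measure S}
    [hμ : IsProbabilityMeasure μ] (hB : MeasurableSet B) (hreach : P μ (evF B) = 1) :
    P μ (evU Bᶜ (avoid P B)) = 0 := by
  have := (hP μ hμ).1
  have hreach_ae : ∀ᵐ ρ ∂P μ, ρ ∈ evF B :=
    (mem_ae_iff_prob_eq_one (measurableSet_evF hB)).2 hreach
  rw [measure_eq_zero_iff_ae_notMem]
  filter_upwards [hreach_ae, hP.ae_notMem_of_mem_avoid μ hB]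
  rintro ρ ⟨j, hj⟩ hafter ⟨k, hk, hbefore⟩
  obtain hjk | hkj := lt_or_ge j k
  exacts [hbefore j hjk hj, hafter k hk j hkj hj]

theorem Decisive.measure_evF_eq_one {μ : Measure S} (hdec : Decisive P μ B)
    (hnull : P μ (evU Bᶜ (avoid P B)) = 0) : P μ (evF B) = 1 := by
  have hunion : (evF B ∪ evU Bᶜ (avoid P B) : Set (ℕ → S)) =ᵐ[P μ] evF B :=
    union_ae_eq_left_of_ae_eq_empty (ae_eq_empty.2 hnull)
  rwa [Decisive, evF_union_evF_eq_evF_union_evU, measure_congr hunion] at hdec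

end PathMeasure

section Abstraction

variable {S₁ S₂ : Type*} [MeasurableSpace S₁] [MeasurableSpace S₂] {κ₁ : Kernel S₁ S₁}
  {κ₂ : Kernel S₂ S₂} {P₁ : Measure S₁ → Measure (ℕ → S₁)} {P₂ : Measure S₂ → Measure (ℕ → S₂)}
  {α : S₁ → S₂} {B' B : Set S₂}

theorem IsAbstraction.qualEquiv_kernel (habs : IsAbstraction κ₁ κ₂ α) (hα : Measurable α)
    (s : S₁) : QualEquiv ((κ₁ s).map α) (κ₂ (α s)) := by
  have h := habs (Measure.dirac s) inferInstance
  rwa [Omega, Omega, Measure.map_dirac' hα, Measure.dirac_bind κ₁.measurable,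
    Measure.dirac_bind κ₂.measurable] at h

theorem IsAbstraction.qualEquiv_Omega (habs : IsAbstraction κ₁ κ₂ α) (hα : Measurable α)
    {μ : Measure S₁} {ν : Measure S₂} (h : QualEquiv (μ.map α) ν) :
    QualEquiv ((Omega κ₁ μ).map α) (Omega κ₂ ν) := by
  intro A hA
  have hmeas : MeasurableSet {t | κ₂ t A = 0} := κ₂.measurable_coe hA (measurableSet_singleton 0)
  calc (Omega κ₁ μ).map α A = 0
      ↔ ∀ᵐ s ∂μ, κ₁ s (α ⁻¹' A) = 0 := by
        rw [Measure.map_apply hα hA, Omega_apply_eq_zero_iff κ₁ μ (hα hA)]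
    _ ↔ ∀ᵐ s ∂μ, κ₂ (α s) A = 0 := by
        refine eventually_congr (.of_forall fun s => ?_)
        rw [← habs.qualEquiv_kernel hα s A hA, Measure.map_apply hα hA]
    _ ↔ ∀ᵐ t ∂μ.map α, κ₂ t A = 0 := (ae_map_iff hα.aemeasurable hmeas).symm
    _ ↔ ∀ᵐ t ∂ν, κ₂ t A = 0 := h _ hmeas.compl
    _ ↔ Omega κ₂ ν A = 0 := (Omega_apply_eq_zero_iff κ₂ ν hA).symm

theorem IsAbstraction.cylProb_eq_zero_iff (habs : IsAbstraction κ₁ κ₂ α) (hα : Measurable α)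
    {μ : Measure S₁} {ν : Measure S₂} (h : QualEquiv (μ.map α) ν) (n : ℕ) {A : ℕ → Set S₂}
    (hA : ∀ i, MeasurableSet (A i)) :
    cylProb κ₁ n μ (fun i => α ⁻¹' A i) = 0 ↔ cylProb κ₂ n ν A = 0 := by
  induction n generalizing μ ν A with
  | zero => rw [cylProb, cylProb, ← Measure.map_apply hα (hA 0), h _ (hA 0)]
  | succ n ih =>
    have hrestrict : QualEquiv ((μ.restrict (α ⁻¹' A 0)).map α) (ν.restrict (A 0)) := by
      rw [← Measure.restrict_map hα (hA 0)]
      exact h.restrict (hA 0)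
    rw [cylProb_succ_eq_cylProb_Omega κ₁ n μ fun i => hα (hA i),
      cylProb_succ_eq_cylProb_Omega κ₂ n ν hA]
    exact ih (habs.qualEquiv_Omega hα hrestrict) fun i => hA (i + 1)

theorem IsAbstraction.measure_evU_preimage_eq_zero_iff (habs : IsAbstraction κ₁ κ₂ α)
    (hP₁ : IsPathMeasure κ₁ P₁) (hP₂ : IsPathMeasure κ₂ P₂) (hα : Measurable α) (μ : Measure S₁)
    [IsProbabilityMeasure μ] (hB' : MeasurableSet B') (hB : MeasurableSet B) :
    P₁ μ (evU (α ⁻¹' B') (α ⁻¹' B)) = 0 ↔ P₂ (μ.map α) (evU B' B) = 0 := by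
  have := Measure.isProbabilityMeasure_map (μ := μ) hα.aemeasurable
  rw [hP₁.measure_evU_eq_zero_iff μ (hα hB') (hα hB), hP₂.measure_evU_eq_zero_iff _ hB' hB]
  refine forall_congr' fun k => ?_
  simp only [← habs.cylProb_eq_zero_iff hα (fun _ _ => Iff.rfl) k
    (measurableSet_untilCyl hB' hB k), preimage_untilCyl]

theorem IsAbstraction.avoid_preimage (habs : IsAbstraction κ₁ κ₂ α) (hP₁ : IsPathMeasure κ₁ P₁)
    (hP₂ : IsPathMeasure κ₂ P₂) (hα : Measurable α) (hB : MeasurableSet B) :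
    avoid P₁ (α ⁻¹' B) = α ⁻¹' avoid P₂ B := by
  ext s
  have h := habs.measure_evU_preimage_eq_zero_iff hP₁ hP₂ hα (Measure.dirac s) .univ hB
  rwa [Set.preimage_univ, ← evF_eq_evU_univ, ← evF_eq_evU_univ, Measure.map_dirac' hα] at h

theorem statement_13_general (hP₁ : IsPathMeasure κ₁ P₁) (hP₂ : IsPathMeasure κ₂ P₂)
    (hα : Measurable α) (habs : IsAbstraction κ₁ κ₂ α) {μ : Measure S₁} [IsProbabilityMeasure μ]
    (hB : MeasurableSet B) (hdec : Decisive P₂ (μ.map α) B)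
    (hreach : P₁ μ (evF (α ⁻¹' B)) = 1) : P₂ (μ.map α) (evF B) = 1 := by
  have hnull₁ : P₁ μ (evU (α ⁻¹' Bᶜ) (α ⁻¹' avoid P₂ B)) = 0 := by
    rw [← habs.avoid_preimage hP₁ hP₂ hα hB]
    exact hP₁.measure_evU_compl_avoid_eq_zero (hα hB) hreach
  have hnull₂ : P₂ (μ.map α) (evU Bᶜ (avoid P₂ B)) = 0 :=
    (habs.measure_evU_preimage_eq_zero_iff hP₁ hP₂ hα μ hB.compl
      (hP₂.measurableSet_avoid hB)).1 hnull₁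
  exact hdec.measure_evF_eq_one hnull₂

end Abstraction

/-- if `T₂` (an `α`-abstraction of `T₁`) is decisive from `α_# μ` w.r.t.
every measurable set, then the abstraction is `μ`-complete. -/
theorem statement_13 {S₁ S₂ : Type*} [MeasurableSpace S₁] [MeasurableSpace S₂]
    (κ₁ : Kernel S₁ S₁) [IsMarkovKernel κ₁] (κ₂ : Kernel S₂ S₂) [IsMarkovKernel κ₂]
    (P₁ : Measure S₁ → Measure (ℕ → S₁)) (hP₁ : IsPathMeasure κ₁ P₁)
    (P₂ : Measure S₂ → Measure (ℕ → S₂)) (hP₂ : IsPathMeasure κ₂ P₂)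
    (α : S₁ → S₂) (hα : Measurable α) (habs : IsAbstraction κ₁ κ₂ α)
    (μ : Measure S₁) (hμ : IsProbabilityMeasure μ)
    (hdec : ∀ B : Set S₂, MeasurableSet B → Decisive P₂ (μ.map α) B) :
    ∀ B : Set S₂, MeasurableSet B →
      P₁ μ (evF (α ⁻¹' B)) = 1 → P₂ (μ.map α) (evF B) = 1 :=
  fun B hB => statement_13_general hP₁ hP₂ hα habs hB (hdec B hB)

end STS
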